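/- arXiv:2103.10004 — 2 statements merged into one kernel-verified Lean document; each statement's English description precedes it below -/
import Mathlib

section
/- For m = 7, 8, 9, the covering functional of the three-dimensional unit cross-polytope satisfies γ_m(K₁) = 2/3; that is, γ₇(K₁) = γ₈(K₁) = γ₉(K₁) = 2/3. -/
open Pointwise

/-- The unit cross-polytope in ℝ³. -/
def K1 : Set (Fin 3 → ℝ) := {x | |x 0| + |x 1| + |x 2| ≤ 1}

/-- `K1` can be covered by `m` translates of `lam • K1`. -/
def CoversWith (m : ℕ) (lam : ℝ) : Prop :=
  ∃ u : Fin m → (Fin 3 → ℝ), K1 ⊆ ⋃ i, (u i +ᵥ lam • K1)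

lemma mem_vadd_smul_K1 {lam : ℝ} (hlam : 0 < lam) (u x : Fin 3 → ℝ) :
    x ∈ u +ᵥ lam • K1 ↔ |x 0 - u 0| + |x 1 - u 1| + |x 2 - u 2| ≤ lam := by
  rw [Set.mem_vadd_set_iff_neg_vadd_mem, Set.mem_smul_set_iff_inv_smul_mem₀ hlam.ne']
  have key : ∀ k, |(lam⁻¹ • (-u +ᵥ x)) k| = |x k - u k| / lam := fun k => by
    rw [Pi.smul_apply, smul_eq_mul, abs_mul, abs_of_pos (inv_pos.2 hlam), vadd_eq_add,
      Pi.add_apply, Pi.neg_apply, neg_add_eq_sub, inv_mul_eq_div]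
  simp only [K1, Set.mem_ofPred_eq, key]
  rw [← add_div, ← add_div, div_le_one hlam]

lemma CoversWith.mono {m n : ℕ} {lam : ℝ} (hmn : m ≤ n) (h : CoversWith m lam) :
    CoversWith n lam := by
  obtain ⟨u, hu⟩ := h
  refine ⟨fun i => if hi : (i : ℕ) < m then u ⟨i, hi⟩ else 0, fun x hx => ?_⟩
  obtain ⟨i, hi⟩ := Set.mem_iUnion.1 (hu hx)
  exact Set.mem_iUnion.2 ⟨i.castLE hmn, by simpa using hi⟩

/-- The translates of `(2 / 3) • K1` centred at the points `±eᵢ / 3` cover `K1`. -/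
lemma coversWith_six_two_thirds : CoversWith 6 (2 / 3) := by
  refine ⟨![![1 / 3, 0, 0], ![-1 / 3, 0, 0], ![0, 1 / 3, 0], ![0, -1 / 3, 0],
    ![0, 0, 1 / 3], ![0, 0, -1 / 3]], fun x hx => ?_⟩
  have hx : |x 0| + |x 1| + |x 2| ≤ 1 := hx
  have move : ∀ a b c : ℝ, |a| + |b| + |c| ≤ 1 → |b| ≤ |a| → |c| ≤ |a| →
      |a - 1 / 3| + |b| + |c| ≤ 2 / 3 ∨ |a - -1 / 3| + |b| + |c| ≤ 2 / 3 := by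
    intro a b c h hb hc
    rcases le_total 0 a with ha | ha
    · left
      rw [abs_of_nonneg ha] at *
      rcases abs_cases (a - 1 / 3) with h' | h' <;> linarith
    · right
      rw [abs_of_nonpos ha] at *
      rcases abs_cases (a - -1 / 3) with h' | h' <;> linarith
  simp only [Set.mem_iUnion, mem_vadd_smul_K1 (by norm_num : (0 : ℝ) < 2 / 3)]
  obtain ⟨h1, h2⟩ | ⟨h1, h2⟩ | ⟨h1, h2⟩ : (|x 1| ≤ |x 0| ∧ |x 2| ≤ |x 0|) ∨
      (|x 0| ≤ |x 1| ∧ |x 2| ≤ |x 1|) ∨ (|x 0| ≤ |x 2| ∧ |x 1| ≤ |x 2|) := by grind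
  · rcases move (x 0) (x 1) (x 2) hx h1 h2 with h | h
    · exact ⟨0, by simpa using h⟩
    · exact ⟨1, by simpa using h⟩
  · rcases move (x 1) (x 0) (x 2) (by linarith) h1 h2 with h | h
    · exact ⟨2, by simpa [add_comm] using h⟩
    · exact ⟨3, by simpa [add_comm] using h⟩
  · rcases move (x 2) (x 0) (x 1) (by linarith) h1 h2 with h | h
    · exact ⟨4, by simpa [add_comm, add_left_comm, add_assoc] using h⟩
    · exact ⟨5, by simpa [add_comm, add_left_comm, add_assoc] using h⟩

/-- A family of more than `m` points of `K1` at mutual `ℓ¹`-distance at least `d` forces `d ≤ 2 lam`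
whenever `m` translates of `lam • K1` cover `K1`. -/
lemma CoversWith.le_two_mul_of_separated {m k : ℕ} {lam d : ℝ} (h : CoversWith m lam)
    (hlam : 0 < lam) (hmk : m < k) (p : Fin k → Fin 3 → ℝ) (hp : ∀ i, p i ∈ K1)
    (hd : ∀ i j, i ≠ j → d ≤ |p i 0 - p j 0| + |p i 1 - p j 1| + |p i 2 - p j 2|) :
    d ≤ 2 * lam := by
  obtain ⟨u, hu⟩ := h
  choose f hf using fun i => Set.mem_iUnion.1 (hu (hp i))
  obtain ⟨i, j, hij, hfij⟩ := Fintype.exists_ne_map_eq_of_card_lt f (by simpa using hmk)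
  have hi := (mem_vadd_smul_K1 hlam _ _).1 (hf i)
  have hj := (mem_vadd_smul_K1 hlam _ _).1 (hf j)
  rw [← hfij] at hj
  have tri : ∀ k, |p i k - p j k| ≤ |p i k - u (f i) k| + |p j k - u (f i) k| := fun k => by
    rw [abs_sub_comm (p j k)]; exact abs_sub_le _ _ _
  linarith [hd i j hij, tri 0, tri 1, tri 2]

/-- Three times the vertices of `K1` and the centroids of four pairwise non-adjacent facets. -/
def separatedPoints : Fin 10 → Fin 3 → ℤ :=
  ![![3, 0, 0], ![-3, 0, 0], ![0, 3, 0], ![0, -3, 0], ![0, 0, 3], ![0, 0, -3],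
    ![1, 1, 1], ![1, -1, -1], ![-1, 1, -1], ![-1, -1, 1]]

lemma two_thirds_le_of_coversWith_nine {lam : ℝ} (hlam : 0 < lam) (h : CoversWith 9 lam) :
    2 / 3 ≤ lam := by
  have hmem : ∀ i, |separatedPoints i 0| + |separatedPoints i 1| + |separatedPoints i 2| ≤ 3 := by
    decide
  have hsep : ∀ i j, i ≠ j → 4 ≤ |separatedPoints i 0 - separatedPoints j 0| +
      |separatedPoints i 1 - separatedPoints j 1| +
      |separatedPoints i 2 - separatedPoints j 2| := by
    decide
  have := h.le_two_mul_of_separated hlam (d := 4 / 3) (by norm_num : 9 < 10)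
    (fun i k => (separatedPoints i k : ℝ) / 3)
    (fun i => by
      have hi : (|(separatedPoints i 0 : ℝ)| + |(separatedPoints i 1 : ℝ)| +
        |(separatedPoints i 2 : ℝ)|) ≤ 3 := by exact_mod_cast hmem i
      simp only [K1, Set.mem_ofPred_eq, abs_div, Nat.abs_ofNat]
      linarith)
    (fun i j hij => by
      have hi : 4 ≤ |(separatedPoints i 0 : ℝ) - separatedPoints j 0| +
        |(separatedPoints i 1 : ℝ) - separatedPoints j 1| +
        |(separatedPoints i 2 : ℝ) - separatedPoints j 2| := by exact_mod_cast hsep i j hij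
      simp only [← sub_div, abs_div, Nat.abs_ofNat]
      linarith)
  linarith

lemma isLeast_two_thirds {m : ℕ} (h6 : 6 ≤ m) (h9 : m ≤ 9) :
    IsLeast {lam : ℝ | 0 < lam ∧ CoversWith m lam} (2 / 3) :=
  ⟨⟨by norm_num, coversWith_six_two_thirds.mono h6⟩,
    fun _ hlam => two_thirds_le_of_coversWith_nine hlam.1 (hlam.2.mono h9)⟩

/-- γ₇(K₁) = γ₈(K₁) = γ₉(K₁) = 2/3. -/
theorem gamma_seven_eight_nine_eq_two_thirds :
    IsLeast {lam : ℝ | 0 < lam ∧ CoversWith 7 lam} (2 / 3) ∧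
    IsLeast {lam : ℝ | 0 < lam ∧ CoversWith 8 lam} (2 / 3) ∧
    IsLeast {lam : ℝ | 0 < lam ∧ CoversWith 9 lam} (2 / 3) :=
  ⟨isLeast_two_thirds (by norm_num) (by norm_num), isLeast_two_thirds (by norm_num) (by norm_num),
    isLeast_two_thirds (by norm_num) (by norm_num)⟩
end

section
/- The optimal 6-covering configuration of the unit cross-polytope K₁ is unique: if u₁, …, u₆ ∈ ℝ³ satisfy K₁ ⊆ ∪_{i=1}^6 ((2/3)K₁ + uᵢ), then {u₁, …, u₆} = {±(1/3, 0, 0), ±(0, 1/3, 0), ±(0, 0, 1/3)}. -/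
open Pointwise

/-- The real sign encoded by a boolean. -/
def boolSign (b : Bool) : ℝ := if b then 1 else -1

lemma boolSign_cases (b : Bool) : boolSign b = 1 ∨ boolSign b = -1 := by
  cases b <;> simp [boolSign]

/-- The vertices `± eⱼ` of the cross-polytope. -/
def crossVertex (v : Fin 3 × Bool) : Fin 3 → ℝ := fun i => if i = v.1 then boolSign v.2 else 0

/-- A point on the segment that joins the vertex `v` (at `ε = 1/3`) to the centroid (at `ε = 0`)
of the facet through `v` whose remaining signs are given by `t`. -/
noncomputable def facetPoint (v : Fin 3 × Bool) (t : Fin 3 → Bool) (ε : ℝ) : Fin 3 → ℝ :=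
  fun i => if i = v.1 then boolSign v.2 * (1 / 3 + 2 * ε) else boolSign (t i) * (1 / 3 - ε)

lemma facetPoint_third (v : Fin 3 × Bool) (t : Fin 3 → Bool) :
    facetPoint v t (1 / 3) = crossVertex v := by
  funext i
  by_cases h : i = v.1 <;> simp [facetPoint, crossVertex, h]
  norm_num

lemma mem_vadd_smul_K1_iff (x u : Fin 3 → ℝ) :
    x ∈ u +ᵥ (2 / 3 : ℝ) • K1 ↔ |x 0 - u 0| + |x 1 - u 1| + |x 2 - u 2| ≤ 2 / 3 := by
  rw [Set.mem_vadd_set_iff_neg_vadd_mem, Set.mem_smul_set_iff_inv_smul_mem₀ (by norm_num)]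
  simp only [K1, Set.mem_ofPred_eq, Pi.smul_apply, vadd_eq_add, Pi.sub_apply,
    smul_eq_mul, abs_mul, neg_add_eq_sub]
  rw [abs_of_pos (by norm_num : (0 : ℝ) < (2 / 3)⁻¹)]
  constructor <;> intro h <;> linarith

lemma abs_boolSign_mul (b : Bool) {r : ℝ} (hr : 0 ≤ r) : |boolSign b * r| = r := by
  rcases boolSign_cases b with h | h <;> simp [h, abs_of_nonneg hr]

lemma sum_abs_facetPoint (v : Fin 3 × Bool) (t : Fin 3 → Bool) {ε : ℝ} (h0 : 0 < ε)
    (h1 : ε ≤ 1 / 3) :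
    |facetPoint v t ε 0| + |facetPoint v t ε 1| + |facetPoint v t ε 2| = 1 := by
  have hp : 0 ≤ 1 / 3 + 2 * ε := by linarith
  have hm : 0 ≤ 1 / 3 - ε := by linarith
  obtain ⟨j, b⟩ := v
  fin_cases j <;> simp [facetPoint, -one_div, -abs_mul, abs_boolSign_mul, hp, hm] <;> ring

/-- A point of the boundary of the cross-polytope and a vertex at distance more than `4/3` do not
lie in a common ball of radius `2/3`. -/
lemma not_mem_of_far (x u : Fin 3 → ℝ) (w : Fin 3 × Bool)
    (hx : |x 0| + |x 1| + |x 2| = 1)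
    (hfar : 4 / 3 < 1 - |x w.1| + |boolSign w.2 - x w.1|)
    (hw : crossVertex w ∈ u +ᵥ (2 / 3 : ℝ) • K1) :
    x ∉ u +ᵥ (2 / 3 : ℝ) • K1 := by
  intro hxu
  rw [mem_vadd_smul_K1_iff] at hw hxu
  have key (i : Fin 3) : |x i| ≤ |x i - u i| + |u i| := by
    simpa using abs_add_le (x i - u i) (u i)
  have key' := abs_sub_le (boolSign w.2) (u w.1) (x w.1)
  rw [abs_sub_comm (u w.1)] at key'
  have k0 := key 0
  have k1 := key 1
  have k2 := key 2
  obtain ⟨j, b⟩ := w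
  fin_cases j <;> simp [crossVertex] at hw hfar key' <;> linarith

lemma facetPoint_far (v w : Fin 3 × Bool) (hvw : w ≠ v) (t : Fin 3 → Bool) {ε : ℝ} (h0 : 0 < ε)
    (h1 : ε ≤ 1 / 3) :
    4 / 3 < 1 - |facetPoint v t ε w.1| + |boolSign w.2 - facetPoint v t ε w.1| := by
  have hp : 0 ≤ 1 / 3 + 2 * ε := by linarith
  have hm : 0 ≤ 1 / 3 - ε := by linarith
  by_cases h : w.1 = v.1
  · have hs : boolSign w.2 = -boolSign v.2 := by
      have : w.2 ≠ v.2 := fun h' => hvw (Prod.ext h h')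
      revert this
      cases w.2 <;> cases v.2 <;> simp [boolSign]
    have e : boolSign w.2 - facetPoint v t ε w.1 = boolSign w.2 * (1 + (1 / 3 + 2 * ε)) := by
      simp only [facetPoint, h, if_true, hs]
      ring
    rw [e, abs_boolSign_mul _ (by linarith), facetPoint, if_pos h, abs_boolSign_mul _ hp]
    linarith
  · have hx : |facetPoint v t ε w.1| = 1 / 3 - ε := by
      rw [facetPoint, if_neg h, abs_boolSign_mul _ hm]
    have hw : |boolSign w.2| = 1 := by simpa using abs_boolSign_mul w.2 zero_le_one
    have := abs_sub_abs_le_abs_sub (boolSign w.2) (facetPoint v t ε w.1)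
    linarith

/-- A ball of radius `2/3` that contains `(s, 0, 0)` and the centroids `(s/3, ± 1/3, ± 1/3)` of the
adjacent facets is centred at `(s/3, 0, 0)`. -/
lemma center_eq_of_bounds {s a b c : ℝ} (hs : s = 1 ∨ s = -1)
    (hv : |s - a| + |b| + |c| ≤ 2 / 3)
    (hpp : |s / 3 - a| + |1 / 3 - b| + |1 / 3 - c| ≤ 2 / 3)
    (hmm : |s / 3 - a| + |-1 / 3 - b| + |-1 / 3 - c| ≤ 2 / 3) :
    a = s / 3 ∧ b = 0 ∧ c = 0 := by
  have b1 := le_abs_self (1 / 3 - b)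
  have b2 := neg_le_abs (-1 / 3 - b)
  have c1 := le_abs_self (1 / 3 - c)
  have c2 := neg_le_abs (-1 / 3 - c)
  have ha : |s / 3 - a| = 0 := le_antisymm (by linarith) (abs_nonneg _)
  have ha' : a = s / 3 := by linarith [abs_eq_zero.mp ha]
  have hsa : |s - a| = 2 / 3 := by
    rcases hs with rfl | rfl <;> rw [ha'] <;> norm_num [abs_of_pos, abs_of_neg]
  refine ⟨ha', abs_eq_zero.mp ?_, abs_eq_zero.mp ?_⟩ <;>
    linarith [abs_nonneg b, abs_nonneg c]

/-- A ball of radius `2/3` that contains all the segments from `v` towards the centroids of the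
facets through `v`, the centroids possibly excluded, is centred at `v / 3`. -/
lemma center_eq_of_facetPoint_mem (v : Fin 3 × Bool) (u : Fin 3 → ℝ)
    (h : ∀ (t : Fin 3 → Bool) (ε : ℝ), 0 < ε → ε ≤ 1 / 3 →
      facetPoint v t ε ∈ u +ᵥ (2 / 3 : ℝ) • K1) :
    u = (1 / 3 : ℝ) • crossVertex v := by
  have hlim (t : Fin 3 → Bool) : |facetPoint v t 0 0 - u 0| + |facetPoint v t 0 1 - u 1| +
      |facetPoint v t 0 2 - u 2| ≤ 2 / 3 := by
    have hc : Continuous fun ε : ℝ => |facetPoint v t ε 0 - u 0| + |facetPoint v t ε 1 - u 1| +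
        |facetPoint v t ε 2 - u 2| := by
      have (i : Fin 3) : Continuous fun ε : ℝ => facetPoint v t ε i := by
        unfold facetPoint
        split_ifs <;> fun_prop
      fun_prop
    refine le_of_tendsto (x := nhdsWithin 0 (Set.Ioi 0)) (hc.tendsto 0 |>.mono_left
      nhdsWithin_le_nhds) ?_
    filter_upwards [Ioc_mem_nhdsGT (by norm_num : (0 : ℝ) < 1 / 3)] with ε hε
    exact (mem_vadd_smul_K1_iff _ _).mp (h t ε hε.1 hε.2)
  have hv := h (fun _ => true) (1 / 3) (by norm_num) le_rfl
  rw [facetPoint_third, mem_vadd_smul_K1_iff] at hv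
  have hp := hlim fun _ => true
  have hm := hlim fun _ => false
  obtain ⟨j, b⟩ := v
  have hb := boolSign_cases b
  have e1 : boolSign true = 1 := rfl
  have e2 : boolSign false = -1 := rfl
  fin_cases j <;>
    simp [crossVertex, facetPoint, e1, e2, -one_div] at hv hp hm
  · obtain ⟨h0, h1, h2⟩ := center_eq_of_bounds (s := boolSign b) (a := u 0) (b := u 1) (c := u 2)
      hb (by linarith) (by ring_nf at hp ⊢; linarith) (by ring_nf at hm ⊢; linarith)
    funext i
    fin_cases i <;> simp [crossVertex, h0, h1, h2]
    ring
  · obtain ⟨h0, h1, h2⟩ := center_eq_of_bounds (s := boolSign b) (a := u 1) (b := u 0) (c := u 2)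
      hb (by linarith) (by ring_nf at hp ⊢; linarith) (by ring_nf at hm ⊢; linarith)
    funext i
    fin_cases i <;> simp [crossVertex, h0, h1, h2]
    ring
  · obtain ⟨h0, h1, h2⟩ := center_eq_of_bounds (s := boolSign b) (a := u 2) (b := u 0) (c := u 1)
      hb (by linarith) (by ring_nf at hp ⊢; linarith) (by ring_nf at hm ⊢; linarith)
    funext i
    fin_cases i <;> simp [crossVertex, h0, h1, h2]
    ring

lemma range_smul_crossVertex :
    Set.range (fun v => (1 / 3 : ℝ) • crossVertex v) =
      ({![1/3, 0, 0], ![-(1/3), 0, 0], ![0, 1/3, 0], ![0, -(1/3), 0],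
        ![0, 0, 1/3], ![0, 0, -(1/3)]} : Set (Fin 3 → ℝ)) := by
  ext x
  simp only [Set.mem_range, Prod.exists, Fin.exists_fin_succ, Bool.exists_bool, Set.mem_insert_iff,
    Set.mem_singleton_iff, funext_iff, Fin.forall_fin_succ]
  simp [crossVertex, boolSign, eq_comm]
  tauto

/-- The optimal 6-covering configuration of `K1` is unique: the six translation vectors
must be `±(1/3,0,0), ±(0,1/3,0), ±(0,0,1/3)`. -/
theorem unique_optimal_six_covering (u : Fin 6 → (Fin 3 → ℝ))
    (hcover : K1 ⊆ ⋃ i, (u i +ᵥ (2 / 3 : ℝ) • K1)) :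
    Set.range u = ({![1/3, 0, 0], ![-(1/3), 0, 0], ![0, 1/3, 0], ![0, -(1/3), 0],
      ![0, 0, 1/3], ![0, 0, -(1/3)]} : Set (Fin 3 → ℝ)) := by
  have hmem (v : Fin 3 × Bool) (t : Fin 3 → Bool) (ε : ℝ) (h0 : 0 < ε) (h1 : ε ≤ 1 / 3) :
      ∃ i, facetPoint v t ε ∈ u i +ᵥ (2 / 3 : ℝ) • K1 :=
    Set.mem_iUnion.mp (hcover (sum_abs_facetPoint v t h0 h1).le)
  have hvert (v : Fin 3 × Bool) : ∃ i, crossVertex v ∈ u i +ᵥ (2 / 3 : ℝ) • K1 := by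
    simpa only [facetPoint_third] using hmem v (fun _ => true) (1 / 3) (by norm_num) le_rfl
  choose f hf using hvert
  have hsep (v w : Fin 3 × Bool) (t : Fin 3 → Bool) (ε : ℝ) (h0 : 0 < ε) (h1 : ε ≤ 1 / 3)
      (h : facetPoint v t ε ∈ u (f w) +ᵥ (2 / 3 : ℝ) • K1) : w = v := by
    by_contra hne
    exact not_mem_of_far _ _ w (sum_abs_facetPoint v t h0 h1) (facetPoint_far v w hne t h0 h1)
      (hf w) h
  have hinj : Function.Injective f := by
    intro w v hwv
    refine hsep v w (fun _ => true) (1 / 3) (by norm_num) le_rfl ?_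
    rw [facetPoint_third, hwv]
    exact hf v
  have hsurj : Function.Surjective f :=
    ((Fintype.bijective_iff_injective_and_card f).mpr ⟨hinj, by simp⟩).2
  have hu : u ∘ f = fun v => (1 / 3 : ℝ) • crossVertex v := by
    funext v
    refine center_eq_of_facetPoint_mem v _ fun t ε h0 h1 => ?_
    obtain ⟨i, hi⟩ := hmem v t ε h0 h1
    obtain ⟨w, rfl⟩ := hsurj i
    rwa [hsep v w t ε h0 h1 hi] at hi
  rw [← hsurj.range_comp u, hu, range_smul_crossVertex]
end
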